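/- Let p > 0, let λ be a Koshliakov sequence for p, let x > 0, and let s ∈ ℂ with 1/2 < Re(s) < 1. Then ∑_{n=1}^∞ w_n·(λ_n² + x²)^{−s} = (√π·x^{1−2s}/(2Γ(s)))·Γ(s − 1/2) − (1/2)·x^{−2s}/(1 + 1/(πp)) + 2^{2−2s}·x^{1−2s}·sin(πs)·∫₀^∞ y^{−s}(y+1)^{−s}/(σ((2y+1)x)·e^{2π(2y+1)x} − 1) dy, where Γ is the complex Gamma function and powers of positive reals are taken with complex exponents. -/

import Mathlib

/-!
The series is obtained by integrating a partial fraction expansion term by term.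

Put `D z = p sin πz + z cos πz` (`koshDen`) and `N z = p cos πz - z sin πz` (`koshNum`).  The zeros
of `D` are real and are exactly `0` and `±λ_n`; they are simple, and `π N / D` has residue
`w_0 = 1 / (1 + 1/(πp))` at `0` and `w_n` at `±λ_n`.  Remove from `π N / D` the poles
`0, ±λ_1, …, ±λ_M`.  The remainder (`koshRem`) is holomorphic on `|Re z| < M + 1/2`, and on the
boundary of the square `|Re z|, |Im z| ≤ M` it is `O(log M)`: the quotient `N / D` is bounded there,
and the polar parts add up to a harmonic sum.  By the maximum principle the bound holds in the whole
square, and since the remainder is odd the Schwarz lemma gives `O(t log M / M)` at `z = it`.  Letting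
`M → ∞` yields (`hasSum_kosh`), for `t > 0`, `t ≠ p`,

  `π (1 + 2 / (σ(t) e^{2πt} - 1)) = w_0 / t + ∑ w_n 2t / (t² + λ_n²)`.

Take `t = (2y+1)x`, multiply by `y^{-s} (y+1)^{-s}` and integrate over `y > 0`
(`kosh_integral_identity`).  The substitution `u = 4x² y(y+1) / (λ² + x²)` turns each term into a
multiple of `(λ² + x²)^{-s} ∫ u^{-s} / (1+u) du = (λ² + x²)^{-s} π / sin πs` (`stieltjes_term`),
while the constant `π` contributes `B(1-s, 2s-1)`.  The reflection and duplication formulas for `Γ`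
then give the stated formula.
-/

open MeasureTheory Set Filter Topology

/-! ### Beta-type integrals -/

/-- The Beta integral in the form `∫₀^∞ u^{a-1} (1+u)^{-(a+b)} du = B(a, b)`. -/
lemma beta_Ioi (a b : ℂ) (ha : 0 < a.re) (hb : 0 < b.re) :
    IntegrableOn (fun u : ℝ => (u : ℂ) ^ (a - 1) * ((1 + u : ℝ) : ℂ) ^ (-(a + b))) (Ioi 0) ∧
    ∫ u in Ioi (0 : ℝ), (u : ℂ) ^ (a - 1) * ((1 + u : ℝ) : ℂ) ^ (-(a + b)) =
      Complex.Gamma a * Complex.Gamma b / Complex.Gamma (a + b) := by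
  set f : ℝ → ℝ := fun u => u / (1 + u)
  set f' : ℝ → ℝ := fun u => 1 / (1 + u) ^ 2
  set g : ℝ → ℂ := fun r => (r : ℂ) ^ (a - 1) * (1 - (r : ℂ)) ^ (b - 1)
  have himg : f '' Ioi 0 = Ioo 0 1 := by
    ext r
    simp only [mem_image, mem_Ioi, mem_Ioo, f]
    constructor
    · rintro ⟨u, hu, rfl⟩
      exact ⟨by positivity, by rw [div_lt_one (by positivity)]; linarith⟩
    · rintro ⟨h0, h1⟩
      have : 0 < 1 - r := by linarith
      refine ⟨r / (1 - r), by positivity, ?_⟩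
      field_simp
      ring
  have hder : ∀ u ∈ Ioi (0 : ℝ), HasDerivWithinAt f (f' u) (Ioi 0) u := by
    intro u hu
    have hu' : (0 : ℝ) < 1 + u := by have := mem_Ioi.1 hu; linarith
    have := ((hasDerivAt_id u).div ((hasDerivAt_id u).const_add 1) hu'.ne')
    refine (this.congr_deriv ?_).hasDerivWithinAt
    simp [f']
  have hinj : InjOn f (Ioi 0) := by
    intro u hu v hv h
    have hu' : (0 : ℝ) < 1 + u := by have := mem_Ioi.1 hu; linarith
    have hv' : (0 : ℝ) < 1 + v := by have := mem_Ioi.1 hv; linarith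
    simp only [f] at h
    rw [div_eq_div_iff hu'.ne' hv'.ne'] at h
    linarith
  have hcongr : ∀ u ∈ Ioi (0 : ℝ), |f' u| • g (f u) =
      (u : ℂ) ^ (a - 1) * ((1 + u : ℝ) : ℂ) ^ (-(a + b)) := by
    intro u hu
    have hu0 : 0 < u := hu
    have hu' : (0 : ℝ) < 1 + u := by linarith
    have hc : ((1 + u : ℝ) : ℂ) ≠ 0 := by exact_mod_cast hu'.ne'
    have e1 : (1 - ((f u : ℝ) : ℂ)) = (((1 + u)⁻¹ : ℝ) : ℂ) := by
      rw [← Complex.ofReal_one, ← Complex.ofReal_sub]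
      congr 1
      simp only [f]; field_simp; ring
    have e2 : ((f u : ℝ) : ℂ) ^ (a - 1) = (u : ℂ) ^ (a - 1) * (((1 + u : ℝ) : ℂ) ^ (a - 1))⁻¹ := by
      simp only [f]
      rw [div_eq_mul_inv, Complex.ofReal_mul, Complex.mul_cpow_ofReal_nonneg hu0.le (by positivity),
        Complex.ofReal_inv, Complex.inv_cpow]
      rw [Complex.arg_ofReal_of_nonneg hu'.le]; exact Real.pi_pos.ne
    have e3 : (((1 + u)⁻¹ : ℝ) : ℂ) ^ (b - 1) = (((1 + u : ℝ) : ℂ) ^ (b - 1))⁻¹ := by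
      rw [Complex.ofReal_inv, Complex.inv_cpow]
      rw [Complex.arg_ofReal_of_nonneg hu'.le]; exact Real.pi_pos.ne
    have e4 : ((|f' u| : ℝ) : ℂ) = ((1 + u : ℝ) : ℂ) ^ (-2 : ℂ) := by
      rw [abs_of_nonneg (by simp only [f']; positivity), Complex.cpow_neg]
      simp [f']
    rw [Complex.real_smul]
    simp only [g]
    rw [e1, e2, e3, e4, ← Complex.cpow_neg, ← Complex.cpow_neg]
    have : -(a + b) = -2 + (-(a - 1) + -(b - 1)) := by ring
    rw [this, Complex.cpow_add _ _ hc, Complex.cpow_add _ _ hc]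
    ring
  have hbi := Complex.betaIntegral_convergent ha hb
  rw [intervalIntegrable_iff_integrableOn_Ioo_of_le zero_le_one, ← himg,
    integrableOn_image_iff_integrableOn_abs_deriv_smul measurableSet_Ioi hder hinj] at hbi
  refine ⟨hbi.congr_fun hcongr measurableSet_Ioi, ?_⟩
  rw [← setIntegral_congr_fun measurableSet_Ioi hcongr,
    ← integral_image_eq_integral_abs_deriv_smul measurableSet_Ioi hder hinj, himg,
    ← integral_Ioc_eq_integral_Ioo, ← intervalIntegral.integral_of_le zero_le_one]
  exact Complex.betaIntegral_eq_Gamma_mul_div a b ha hb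

/-- With `t = (2y+1)x`, the integral of `y^{-s} (y+1)^{-s} 2t / (t² + l²)` over `y > 0`.  Since
`t² + l² = (l² + x²) + 4x² y(y+1)`, the substitution `u = 4x² y(y+1) / (l² + x²)` reduces it to
`B(1-s, s) = π / sin πs`. -/
lemma stieltjes_term (x l : ℝ) (hx : 0 < x) (s : ℂ) (hs0 : 0 < s.re) (hs1 : s.re < 1) :
    IntegrableOn (fun y : ℝ => (y : ℂ) ^ (-s) * ((y + 1 : ℝ) : ℂ) ^ (-s) *
      ((2 * ((2 * y + 1) * x) / (((2 * y + 1) * x) ^ 2 + l ^ 2) : ℝ) : ℂ)) (Ioi 0) ∧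
    ∫ y in Ioi (0 : ℝ), (y : ℂ) ^ (-s) * ((y + 1 : ℝ) : ℂ) ^ (-s) *
      ((2 * ((2 * y + 1) * x) / (((2 * y + 1) * x) ^ 2 + l ^ 2) : ℝ) : ℂ) =
      ((1 / (2 * x) : ℝ) : ℂ) * ((4 * x ^ 2 : ℝ) : ℂ) ^ s * (Real.pi / Complex.sin (Real.pi * s)) *
        ((l ^ 2 + x ^ 2 : ℝ) : ℂ) ^ (-s) := by
  set c : ℝ := l ^ 2 + x ^ 2 with hcdef
  have hc : 0 < c := by positivity
  set k : ℝ := 4 * x ^ 2 / c with hk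
  have hk0 : 0 < k := by positivity
  set f : ℝ → ℝ := fun y => k * (y * (y + 1))
  set f' : ℝ → ℝ := fun y => k * (2 * y + 1)
  set g : ℝ → ℂ := fun u => (u : ℂ) ^ ((1 - s) - 1) * ((1 + u : ℝ) : ℂ) ^ (-((1 - s) + s))
  have himg : f '' Ioi 0 = Ioi 0 := by
    ext r
    simp only [mem_image, mem_Ioi, f]
    constructor
    · rintro ⟨u, hu, rfl⟩
      positivity
    · intro h0
      have h1 : 0 < r / k := by positivity
      have hsq : 1 < √(1 + 4 * (r / k)) := by
        rw [Real.lt_sqrt zero_le_one]; linarith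
      have hsq2 := Real.sq_sqrt (show 0 ≤ 1 + 4 * (r / k) by positivity)
      refine ⟨(√(1 + 4 * (r / k)) - 1) / 2, by linarith, ?_⟩
      have : (√(1 + 4 * (r / k)) - 1) / 2 * ((√(1 + 4 * (r / k)) - 1) / 2 + 1) = r / k := by
        nlinarith
      rw [this]; field_simp
  have hder : ∀ u ∈ Ioi (0 : ℝ), HasDerivWithinAt f (f' u) (Ioi 0) u := by
    intro u hu
    have := ((hasDerivAt_id u).mul ((hasDerivAt_id u).add_const 1)).const_mul k
    refine (this.congr_deriv ?_).hasDerivWithinAt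
    simp only [f', id]; ring
  have hinj : InjOn f (Ioi 0) := by
    intro u hu v hv h
    have hu' := mem_Ioi.1 hu
    have hv' := mem_Ioi.1 hv
    simp only [f] at h
    have h2 := mul_left_cancel₀ hk0.ne' h
    have h3 : (u - v) * (u + v + 1) = 0 := by linarith
    rcases mul_eq_zero.1 h3 with h | h <;> linarith
  set C : ℂ := ((1 / (2 * x) : ℝ) : ℂ) * ((4 * x ^ 2 : ℝ) : ℂ) ^ s * (c : ℂ) ^ (-s) with hC
  have hcongr : ∀ y ∈ Ioi (0 : ℝ), C * (|f' y| • g (f y)) =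
      (y : ℂ) ^ (-s) * ((y + 1 : ℝ) : ℂ) ^ (-s) *
      ((2 * ((2 * y + 1) * x) / (((2 * y + 1) * x) ^ 2 + l ^ 2) : ℝ) : ℂ) := by
    intro y hy
    have hy0 : 0 < y := hy
    have h4 : ((4 * x ^ 2 : ℝ) : ℂ) ^ s ≠ 0 := by
      rw [Ne, Complex.cpow_eq_zero_iff]
      have : ((4 * x ^ 2 : ℝ) : ℂ) ≠ 0 := by exact_mod_cast (by positivity : (4 * x ^ 2 : ℝ) ≠ 0)
      tauto
    have hcs : (c : ℂ) ^ s ≠ 0 := by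
      rw [Ne, Complex.cpow_eq_zero_iff]
      have : (c : ℂ) ≠ 0 := by exact_mod_cast hc.ne'
      tauto
    have e1 : ((f y : ℝ) : ℂ) ^ ((1 - s) - 1) =
        (((4 * x ^ 2 : ℝ) : ℂ) ^ s)⁻¹ * (c : ℂ) ^ s *
          ((y : ℂ) ^ (-s) * ((y + 1 : ℝ) : ℂ) ^ (-s)) := by
      have : (1 - s) - 1 = -s := by ring
      rw [this]
      simp only [f, hk]
      have h6 : 0 < 4 * x ^ 2 := by positivity
      generalize (4 * x ^ 2 : ℝ) = q at h6
      have hcarg : (c : ℂ).arg ≠ Real.pi := by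
        rw [Complex.arg_ofReal_of_nonneg hc.le]; exact Real.pi_pos.ne
      rw [Complex.ofReal_mul, Complex.mul_cpow_ofReal_nonneg (by positivity) (by positivity),
        div_eq_mul_inv, Complex.ofReal_mul,
        Complex.mul_cpow_ofReal_nonneg (by positivity) (by positivity), Complex.ofReal_mul,
        Complex.mul_cpow_ofReal_nonneg (by positivity) (by positivity), Complex.ofReal_inv,
        Complex.inv_cpow _ _ hcarg, Complex.cpow_neg, Complex.cpow_neg (c : ℂ), inv_inv]
    have e2 : ((1 + f y : ℝ) : ℂ) ^ (-((1 - s) + s)) = ((1 / (1 + f y) : ℝ) : ℂ) := by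
      have : -((1 - s) + s) = -1 := by ring
      rw [this, Complex.cpow_neg_one]
      push_cast; simp
    have e3 : (2 * ((2 * y + 1) * x) / (((2 * y + 1) * x) ^ 2 + l ^ 2) : ℝ) =
        1 / (2 * x) * |f' y| * (1 / (1 + f y)) := by
      rw [abs_of_nonneg (by simp only [f']; positivity)]
      simp only [f', f, hk]
      have h5 : ((2 * y + 1) * x) ^ 2 + l ^ 2 = c + 4 * x ^ 2 * (y * (y + 1)) := by
        rw [hcdef]; ring
      rw [h5]
      field_simp
      ring
    rw [Complex.real_smul, e3]
    simp only [g]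
    rw [e1, e2, hC, Complex.cpow_neg (c : ℂ)]
    generalize ((4 * x ^ 2 : ℝ) : ℂ) ^ s = A at h4
    generalize (c : ℂ) ^ s = B at hcs
    generalize 1 / (1 + f y) = E
    push_cast
    field_simp
  have hb := beta_Ioi (1 - s) s (by simpa using hs1) hs0
  have hbi := hb.1
  rw [← himg, integrableOn_image_iff_integrableOn_abs_deriv_smul measurableSet_Ioi hder hinj] at hbi
  refine ⟨IntegrableOn.congr_fun (hbi.const_mul C) hcongr measurableSet_Ioi, ?_⟩
  rw [← setIntegral_congr_fun measurableSet_Ioi hcongr, integral_const_mul,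
    ← integral_image_eq_integral_abs_deriv_smul measurableSet_Ioi hder hinj, himg, hb.2]
  rw [show 1 - s + s = 1 by ring, Complex.Gamma_one, mul_comm (Complex.Gamma (1 - s)),
    Complex.Gamma_mul_Gamma_one_sub, hC]
  ring

/-! ### Removing finitely many simple poles -/

/-- Finitely many zeros of a holomorphic function can be divided out. -/
lemma factor_zeros {U : Set ℂ} (hU : IsOpen U) (T : Finset ℂ) :
    ∀ f : ℂ → ℂ, DifferentiableOn ℂ f U → (∀ μ ∈ T, μ ∈ U) → (∀ μ ∈ T, f μ = 0) →
      ∃ g : ℂ → ℂ, DifferentiableOn ℂ g U ∧ ∀ z ∈ U, f z = (∏ μ ∈ T, (z - μ)) * g z := by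
  induction T using Finset.induction_on with
  | empty => intro f hf _ _; exact ⟨f, hf, by simp⟩
  | insert a T ha ih =>
    intro f hf hTU hfT
    obtain ⟨g, hg, hfg⟩ := ih f hf (fun μ h => hTU μ (Finset.mem_insert_of_mem h))
      (fun μ h => hfT μ (Finset.mem_insert_of_mem h))
    have haU := hTU a (Finset.mem_insert_self _ _)
    have hga : g a = 0 := by
      have h := hfg a haU
      rw [hfT a (Finset.mem_insert_self _ _)] at h
      refine (mul_eq_zero.1 h.symm).resolve_left (Finset.prod_ne_zero_iff.2 fun μ hμ => ?_)
      rw [sub_ne_zero]; rintro rfl; exact ha hμ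
    refine ⟨dslope g a, (Complex.differentiableOn_dslope (hU.mem_nhds haU)).2 hg, fun z hz => ?_⟩
    have h2 := sub_smul_dslope g a z
    rw [hga, sub_zero, smul_eq_mul] at h2
    rw [hfg z hz, Finset.prod_insert ha, ← h2]
    ring

/-- If the zeros of `D` in `U` are simple and form the finite set `T`, then `A / D` minus its polar
parts at the points of `T` extends holomorphically to `U`. -/
lemma partial_fractions {U : Set ℂ} (hU : IsOpen U) (T : Finset ℂ) (A D : ℂ → ℂ)
    (hA : DifferentiableOn ℂ A U) (hD : DifferentiableOn ℂ D U)
    (hTU : ∀ μ ∈ T, μ ∈ U) (hDT : ∀ μ ∈ T, D μ = 0) (hDT' : ∀ μ ∈ T, deriv D μ ≠ 0)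
    (hne : ∀ z ∈ U, z ∉ T → D z ≠ 0) :
    ∃ g : ℂ → ℂ, DifferentiableOn ℂ g U ∧
      ∀ z ∈ U, z ∉ T → g z = A z / D z - ∑ μ ∈ T, (A μ / deriv D μ) / (z - μ) := by
  classical
  obtain ⟨H, hH, hDH⟩ := factor_zeros hU T D hD hTU hDT
  have hder : ∀ μ ∈ T, deriv D μ = (∏ ν ∈ T.erase μ, (μ - ν)) * H μ := by
    intro μ hμ
    have hUμ := hU.mem_nhds (hTU μ hμ)
    have hQ : DifferentiableAt ℂ (fun z => (∏ ν ∈ T.erase μ, (z - ν)) * H z) μ :=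
      (by fun_prop : DifferentiableAt ℂ (fun z => ∏ ν ∈ T.erase μ, (z - ν)) μ).mul
        (hH.differentiableAt hUμ)
    have h1 := ((hasDerivAt_id μ).sub_const μ).mul hQ.hasDerivAt
    have h2 : D =ᶠ[𝓝 μ] fun z => (z - μ) * ((∏ ν ∈ T.erase μ, (z - ν)) * H z) := by
      filter_upwards [hUμ] with z hz
      rw [hDH z hz, ← Finset.mul_prod_erase T _ hμ]
      ring
    rw [h2.deriv_eq]
    refine h1.deriv.trans ?_
    simp
  have hHne : ∀ z ∈ U, H z ≠ 0 := by
    intro z hz h0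
    by_cases hzT : z ∈ T
    · exact hDT' z hzT (by rw [hder z hzT, h0, mul_zero])
    · exact hne z hz hzT (by rw [hDH z hz, h0, mul_zero])
  -- `F` is the desired remainder times `∏ (z - μ)`; it vanishes on `T`, so the product divides it.
  set F : ℂ → ℂ := fun z => A z / H z -
    ∑ μ ∈ T, (A μ / deriv D μ) * ∏ ν ∈ T.erase μ, (z - ν) with hF
  have hFd : DifferentiableOn ℂ F U :=
    (hA.div hH hHne).sub (by fun_prop)
  have hF0 : ∀ μ ∈ T, F μ = 0 := by
    intro μ hμ
    simp only [hF]
    rw [Finset.sum_eq_single_of_mem μ hμ]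
    · have h3 := hDT' μ hμ
      have h4 := hHne μ (hTU μ hμ)
      rw [hder μ hμ] at h3 ⊢
      have h5 := left_ne_zero_of_mul h3
      field_simp
      simp
    · intro ν hν hne'
      rw [Finset.prod_eq_zero (Finset.mem_erase.2 ⟨hne'.symm, hμ⟩) (sub_self μ), mul_zero]
  obtain ⟨g, hg, hFg⟩ := factor_zeros hU T F hFd hTU hF0
  refine ⟨g, hg, fun z hz hzT => ?_⟩
  have hP : ∏ μ ∈ T, (z - μ) ≠ 0 := Finset.prod_ne_zero_iff.2 fun μ hμ => by
    rw [sub_ne_zero]; rintro rfl; exact hzT hμ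
  have h6 := hFg z hz
  apply mul_left_cancel₀ hP
  rw [← h6, hDH z hz, mul_sub, Finset.mul_sum]
  simp only [hF]
  have h7 := hHne z hz
  congr 1
  · field_simp
  · refine Finset.sum_congr rfl fun μ hμ => ?_
    have : z - μ ≠ 0 := by rw [sub_ne_zero]; rintro rfl; exact hzT hμ
    rw [← Finset.mul_prod_erase T _ hμ]
    field_simp

/-! ### The poles of `koshNum / koshDen` -/

/-- Koshliakov sequences: `n - 1/2 < λ_n < n` and `tan πλ_n = -λ_n / p` for `n ≥ 1`.  The value at
index `0` is unconstrained. -/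
def IsKoshliakov (p : ℝ) (lam : ℕ → ℝ) : Prop :=
  ∀ n : ℕ, 1 ≤ n → (n : ℝ) - 1 / 2 < lam n ∧ lam n < n ∧ Real.tan (Real.pi * lam n) = -(lam n) / p

/-- `p sin πz + z cos πz`, whose zeros are `0` and `±λ_n`. -/
noncomputable def koshDen (p : ℝ) (z : ℂ) : ℂ :=
  p * Complex.sin (Real.pi * z) + z * Complex.cos (Real.pi * z)

/-- `p cos πz - z sin πz`. -/
noncomputable def koshNum (p : ℝ) (z : ℂ) : ℂ :=
  p * Complex.cos (Real.pi * z) - z * Complex.sin (Real.pi * z)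

lemma koshDen_neg (p : ℝ) (z : ℂ) : koshDen p (-z) = -koshDen p z := by
  simp [koshDen]; ring

lemma koshNum_neg (p : ℝ) (z : ℂ) : koshNum p (-z) = koshNum p z := by
  simp [koshNum]

lemma hasDerivAt_koshDen (p : ℝ) (z : ℂ) : HasDerivAt (koshDen p)
    ((p * Real.pi + 1) * Complex.cos (Real.pi * z) - Real.pi * z * Complex.sin (Real.pi * z)) z := by
  have h0 : HasDerivAt (fun z : ℂ => (Real.pi : ℂ) * z) Real.pi z := by
    simpa using (hasDerivAt_id z).const_mul (Real.pi : ℂ)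
  have := (h0.csin.const_mul (p : ℂ)).add ((hasDerivAt_id z).mul h0.ccos)
  refine this.congr_deriv ?_
  simp only [id]; ring

/-- The zeros of `koshDen` are real: for `z = a + ib`, the imaginary part of
`koshDen p z * conj (cos πz)` is `p sinh πb cosh πb + b |cos πz|²`, which has the sign of `b`. -/
lemma im_eq_zero_of_koshDen {p : ℝ} (hp : 0 < p) {z : ℂ} (h : koshDen p z = 0) : z.im = 0 := by
  obtain ⟨a, b⟩ := z
  have hz : ((Real.pi : ℂ) * (⟨a, b⟩ : ℂ)) =
      ((Real.pi * a : ℝ) : ℂ) + ((Real.pi * b : ℝ) : ℂ) * Complex.I := by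
    apply Complex.ext <;> simp
  simp only [koshDen, hz, Complex.sin_add_mul_I, Complex.cos_add_mul_I, ← Complex.ofReal_sin,
    ← Complex.ofReal_cos, ← Complex.ofReal_sinh, ← Complex.ofReal_cosh] at h
  generalize hS : Real.sin (Real.pi * a) = S at h
  generalize hC : Real.cos (Real.pi * a) = C at h
  generalize hsh : Real.sinh (Real.pi * b) = sh at h
  generalize hch : Real.cosh (Real.pi * b) = ch at h
  have hre := congrArg Complex.re h
  have him := congrArg Complex.im h
  simp at hre him
  have h1 : S ^ 2 + C ^ 2 = 1 := by rw [← hS, ← hC, Real.sin_sq_add_cos_sq]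
  have hchp : 0 < ch := hch ▸ Real.cosh_pos _
  have key : p * (sh * ch) + b * ((C * ch) ^ 2 + (S * sh) ^ 2) = 0 := by
    have e : p * (sh * ch) * (S ^ 2 + C ^ 2) + b * ((C * ch) ^ 2 + (S * sh) ^ 2) = 0 := by
      linear_combination him * (C * ch) + hre * (S * sh)
    rwa [h1, mul_one] at e
  show b = 0
  have hpi := Real.pi_pos
  rcases lt_trichotomy b 0 with hb | hb | hb
  · have : sh < 0 := hsh ▸ Real.sinh_neg_iff.2 (by nlinarith)
    have h3 : p * (sh * ch) < 0 := mul_neg_of_pos_of_neg hp (mul_neg_of_neg_of_pos this hchp)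
    have h4 : b * ((C * ch) ^ 2 + (S * sh) ^ 2) ≤ 0 :=
      mul_nonpos_of_nonpos_of_nonneg hb.le (by positivity)
    linarith
  · exact hb
  · have : 0 < sh := hsh ▸ Real.sinh_pos_iff.2 (by positivity)
    have : 0 < p * (sh * ch) := by positivity
    have : 0 ≤ b * ((C * ch) ^ 2 + (S * sh) ^ 2) := by positivity
    linarith

/-- A positive real zero `a` of `koshDen` satisfies `tan πa = -a / p < 0`, so it lies in
`(n - 1/2, n)` with `n = ⌈a⌉`; there `tan πa` increases and `-a / p` decreases, so `a = λ_n`. -/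
lemma pos_real_zero {p : ℝ} (hp : 0 < p) {lam : ℕ → ℝ}
    (hlam : IsKoshliakov p lam)
    {a : ℝ} (ha : 0 < a) (h : p * Real.sin (Real.pi * a) + a * Real.cos (Real.pi * a) = 0) :
    ∃ n : ℕ, 1 ≤ n ∧ a = lam n := by
  have hpi := Real.pi_pos
  have hcos : Real.cos (Real.pi * a) ≠ 0 := by
    intro h0
    have h1 := Real.sin_sq_add_cos_sq (Real.pi * a)
    rw [h0, mul_zero, add_zero] at h
    rw [h0, (mul_eq_zero.1 h).resolve_left hp.ne'] at h1
    norm_num at h1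
  have htan : Real.tan (Real.pi * a) = -a / p := by
    rw [Real.tan_eq_sin_div_cos, div_eq_div_iff hcos hp.ne']; linarith
  have hn1 : 1 ≤ ⌈a⌉₊ := Nat.one_le_iff_ne_zero.2 (Nat.ceil_pos.2 ha).ne'
  set n := ⌈a⌉₊
  have hle : a ≤ n := Nat.le_ceil a
  have hlt : (n : ℝ) < a + 1 := Nat.ceil_lt_add_one ha.le
  have hper : Real.tan (Real.pi * a - n * Real.pi) = -a / p := by
    rw [Real.tan_sub_nat_mul_pi, htan]
  have hper' : Real.tan (Real.pi * lam n - n * Real.pi) = -(lam n) / p := by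
    rw [Real.tan_sub_nat_mul_pi, (hlam n hn1).2.2]
  have hneg : -a / p < 0 := div_neg_of_neg_of_pos (by linarith) hp
  have hgt : (n : ℝ) - 1 / 2 < a := by
    by_contra hcon
    push Not at hcon
    have h3 : Real.tan (Real.pi * a - n * Real.pi + Real.pi) = -a / p := by
      rw [Real.tan_add_pi, hper]
    have h4 := Real.tan_nonneg_of_nonneg_of_le_pi_div_two
      (x := Real.pi * a - n * Real.pi + Real.pi) (by nlinarith) (by nlinarith)
    linarith
  have hlt' : a < n := by
    refine lt_of_le_of_ne hle fun h5 => ?_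
    rw [h5] at hper
    rw [mul_comm, sub_self, Real.tan_zero, ← h5] at hper
    linarith
  obtain ⟨h6, h7, -⟩ := hlam n hn1
  have mA : Real.pi * a - n * Real.pi ∈ Ioo (-(Real.pi / 2)) (Real.pi / 2) :=
    ⟨by nlinarith, by nlinarith⟩
  have mL : Real.pi * lam n - n * Real.pi ∈ Ioo (-(Real.pi / 2)) (Real.pi / 2) :=
    ⟨by nlinarith, by nlinarith⟩
  refine ⟨n, hn1, ?_⟩
  rcases lt_trichotomy a (lam n) with h8 | h8 | h8
  · have := Real.strictMonoOn_tan mA mL (by nlinarith)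
    rw [hper, hper', div_lt_div_iff_of_pos_right hp] at this
    linarith
  · exact h8
  · have := Real.strictMonoOn_tan mL mA (by nlinarith)
    rw [hper, hper', div_lt_div_iff_of_pos_right hp] at this
    linarith

/-- The weight `w_n`, as a function of `l = λ_n`; it is the residue of `π koshNum / koshDen` at
`±λ_n`. -/
noncomputable def koshWt (p l : ℝ) : ℝ := (p ^ 2 + l ^ 2) / (p * (p + 1 / Real.pi) + l ^ 2)

/-- The residue of `π koshNum / koshDen` at `0`. -/
noncomputable def koshWtZero (p : ℝ) : ℝ := 1 / (1 + 1 / (Real.pi * p))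

/-- The points `0, ±λ_1, …, ±λ_N`, which are the zeros of `koshDen` in the strip
`|Re z| < N + 1/2`. -/
noncomputable def koshZeros (lam : ℕ → ℝ) (N : ℕ) : Finset ℂ :=
  insert 0 ((Finset.range N).image (fun n => (lam (n + 1) : ℂ)) ∪
    (Finset.range N).image (fun n => -(lam (n + 1) : ℂ)))

lemma lam_pos {p : ℝ} {lam : ℕ → ℝ} (hlam : IsKoshliakov p lam)
    (n : ℕ) : 0 < lam (n + 1) := by
  have := (hlam (n + 1) (by omega)).1
  push_cast at this
  have : (0 : ℝ) ≤ n := n.cast_nonneg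
  linarith

lemma sum_koshZeros {p : ℝ} {lam : ℕ → ℝ} (hlam : IsKoshliakov p lam)
    (N : ℕ) (φ : ℂ → ℂ) : ∑ μ ∈ koshZeros lam N, φ μ =
    φ 0 + ∑ n ∈ Finset.range N, (φ (lam (n + 1)) + φ (-(lam (n + 1)))) := by
  have hpos := lam_pos hlam
  have hinj : ∀ m n : ℕ, lam (m + 1) = lam (n + 1) → m = n := by
    intro m n h
    have h1 := hlam (m + 1) (by omega)
    have h2 := hlam (n + 1) (by omega)
    rw [h] at h1
    have h3 : (m + 1 : ℝ) < (n + 1 : ℝ) + 1 := by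
      have := h1.1; have := h2.2.1; push_cast at *; linarith
    have h4 : (n + 1 : ℝ) < (m + 1 : ℝ) + 1 := by
      have := h2.1; have := h1.2.1; push_cast at *; linarith
    norm_cast at h3 h4
    omega
  rw [koshZeros, Finset.sum_insert, Finset.sum_union, Finset.sum_image, Finset.sum_image,
    Finset.sum_add_distrib]
  · intro m _ n _ h
    exact hinj m n (Complex.ofReal_injective (neg_injective h))
  · intro m _ n _ h
    exact hinj m n (Complex.ofReal_injective h)
  · rw [Finset.disjoint_left]
    intro z hz hz'
    obtain ⟨m, -, rfl⟩ := Finset.mem_image.1 hz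
    obtain ⟨n, -, h⟩ := Finset.mem_image.1 hz'
    have h' : -lam (n + 1) = lam (m + 1) := by exact_mod_cast h
    linarith [hpos m, hpos n]
  · intro hz
    rcases Finset.mem_union.1 hz with hz | hz
    · obtain ⟨m, -, h⟩ := Finset.mem_image.1 hz
      exact (hpos m).ne' (by exact_mod_cast h)
    · obtain ⟨m, -, h⟩ := Finset.mem_image.1 hz
      exact (hpos m).ne' (by exact_mod_cast neg_eq_zero.1 h)

lemma mem_koshZeros {p : ℝ} (hp : 0 < p) {lam : ℕ → ℝ} (hlam : IsKoshliakov p lam)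
    {N : ℕ} {z : ℂ} (hz : |z.re| < N + 1 / 2) (h : koshDen p z = 0) :
    z ∈ koshZeros lam N := by
  have him := im_eq_zero_of_koshDen hp h
  obtain ⟨a, rfl⟩ : ∃ a : ℝ, z = a := ⟨z.re, by apply Complex.ext <;> simp [him]⟩
  have hr : p * Real.sin (Real.pi * a) + a * Real.cos (Real.pi * a) = 0 := by
    simp only [koshDen] at h
    exact_mod_cast h
  simp only [Complex.ofReal_re] at hz
  rw [abs_lt] at hz
  have key : ∀ n : ℕ, 1 ≤ n → lam n < N + 1 / 2 → n - 1 ∈ Finset.range N := by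
    intro n hn hl
    have := (hlam n hn).1
    have h3 : (n : ℝ) < N + 1 := by linarith
    norm_cast at h3
    rw [Finset.mem_range]; omega
  rcases lt_trichotomy a 0 with ha | ha | ha
  · obtain ⟨n, hn, hne⟩ := pos_real_zero hp hlam (a := -a) (by linarith)
      (by simp only [mul_neg, Real.sin_neg, Real.cos_neg]; linarith)
    refine Finset.mem_insert_of_mem (Finset.mem_union_right _ (Finset.mem_image.2
      ⟨n - 1, key n hn (by linarith), ?_⟩))
    rw [Nat.sub_add_cancel hn, ← hne]; simp
  · simp [koshZeros, ha]
  · obtain ⟨n, hn, hne⟩ := pos_real_zero hp hlam ha hr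
    refine Finset.mem_insert_of_mem (Finset.mem_union_left _ (Finset.mem_image.2
      ⟨n - 1, key n hn (by linarith), ?_⟩))
    rw [Nat.sub_add_cancel hn, ← hne]

lemma koshDen_zero (p : ℝ) : koshDen p 0 = 0 := by simp [koshDen]

lemma sin_lam {p : ℝ} (hp : 0 < p) {lam : ℕ → ℝ} (hlam : IsKoshliakov p lam)
    (n : ℕ) : Real.cos (Real.pi * lam (n + 1)) ≠ 0 ∧
    Real.sin (Real.pi * lam (n + 1)) = -lam (n + 1) / p * Real.cos (Real.pi * lam (n + 1)) := by
  have h := (hlam (n + 1) (by omega)).2.2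
  have hpos := lam_pos hlam n
  have hcos : Real.cos (Real.pi * lam (n + 1)) ≠ 0 := by
    intro h0
    rw [Real.tan_eq_sin_div_cos, h0, div_zero] at h
    exact (div_neg_of_neg_of_pos (neg_lt_zero.2 hpos) hp).ne h.symm
  refine ⟨hcos, ?_⟩
  rw [← h, Real.tan_mul_cos hcos]

lemma koshDen_lam {p : ℝ} (hp : 0 < p) {lam : ℕ → ℝ} (hlam : IsKoshliakov p lam)
    (n : ℕ) : koshDen p (lam (n + 1)) = 0 := by
  obtain ⟨-, h⟩ := sin_lam hp hlam n
  have : p * Real.sin (Real.pi * lam (n + 1)) + lam (n + 1) * Real.cos (Real.pi * lam (n + 1)) = 0 := by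
    rw [h]; field_simp; ring
  simp only [koshDen]
  exact_mod_cast this

lemma deriv_koshDen_lam {p : ℝ} (hp : 0 < p) {lam : ℕ → ℝ} (hlam : IsKoshliakov p lam)
    (n : ℕ) : deriv (koshDen p) (lam (n + 1)) ≠ 0 ∧
    Real.pi * koshNum p (lam (n + 1)) / deriv (koshDen p) (lam (n + 1)) = koshWt p (lam (n + 1)) := by
  obtain ⟨hc, h⟩ := sin_lam hp hlam n
  have hpi := Real.pi_pos
  set l := lam (n + 1)
  have e1 : (p * Real.pi + 1) * Real.cos (Real.pi * l) - Real.pi * l * Real.sin (Real.pi * l) =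
      Real.cos (Real.pi * l) * (Real.pi / p * (p * (p + 1 / Real.pi) + l ^ 2)) := by
    rw [h]; field_simp; ring
  have e2 : Real.pi * (p * Real.cos (Real.pi * l) - l * Real.sin (Real.pi * l)) =
      Real.cos (Real.pi * l) * (Real.pi / p * (p ^ 2 + l ^ 2)) := by
    rw [h]; field_simp; ring
  have d1 : deriv (koshDen p) l =
      ((Real.cos (Real.pi * l) * (Real.pi / p * (p * (p + 1 / Real.pi) + l ^ 2)) : ℝ) : ℂ) := by
    rw [(hasDerivAt_koshDen p l).deriv, ← e1]; push_cast; ring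
  have d2 : Real.pi * koshNum p l =
      ((Real.cos (Real.pi * l) * (Real.pi / p * (p ^ 2 + l ^ 2)) : ℝ) : ℂ) := by
    rw [← e2, koshNum]; push_cast; ring
  have hpos : 0 < p * (p + 1 / Real.pi) + l ^ 2 := by positivity
  rw [d1, d2]
  refine ⟨by exact_mod_cast mul_ne_zero hc (by positivity), ?_⟩
  rw [← Complex.ofReal_div]
  congr 1
  rw [koshWt]
  field_simp

lemma deriv_koshDen_zero {p : ℝ} (hp : 0 < p) : deriv (koshDen p) 0 ≠ 0 ∧
    Real.pi * koshNum p 0 / deriv (koshDen p) 0 = koshWtZero p := by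
  have hpi := Real.pi_pos
  have d1 : deriv (koshDen p) 0 = ((p * Real.pi + 1 : ℝ) : ℂ) := by
    rw [(hasDerivAt_koshDen p 0).deriv]; simp
  have d2 : Real.pi * koshNum p 0 = ((Real.pi * p : ℝ) : ℂ) := by
    simp [koshNum]
  rw [d1, d2]
  refine ⟨by exact_mod_cast (by positivity : (0 : ℝ) < p * Real.pi + 1).ne', ?_⟩
  rw [← Complex.ofReal_div]
  congr 1
  rw [koshWtZero]
  field_simp

lemma deriv_koshDen_neg (p : ℝ) (z : ℂ) : deriv (koshDen p) (-z) = deriv (koshDen p) z := by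
  rw [(hasDerivAt_koshDen p z).deriv, (hasDerivAt_koshDen p (-z)).deriv]
  simp

/-! ### The remainder of the partial fraction expansion -/

/-- On the boundary of the square `|Re z|, |Im z| ≤ N`, `|tan πz| ≤ 2`: on the vertical sides
`sin (π Re z) = 0`, and on the horizontal ones `|sinh (π Im z)| ≥ 1`. -/
lemma norm_sin_le_two_norm_cos {z : ℂ} {N : ℕ} (hN : 1 ≤ N)
    (hz : |z.re| = N ∨ |z.im| = N) :
    ‖Complex.sin (Real.pi * z)‖ ≤ 2 * ‖Complex.cos (Real.pi * z)‖ := by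
  obtain ⟨a, b⟩ := z
  have hpi := Real.pi_pos
  have hz' : ((Real.pi : ℂ) * (⟨a, b⟩ : ℂ)) =
      ((Real.pi * a : ℝ) : ℂ) + ((Real.pi * b : ℝ) : ℂ) * Complex.I := by
    apply Complex.ext <;> simp
  rw [hz', Complex.sin_add_mul_I, Complex.cos_add_mul_I, ← Complex.ofReal_sin,
    ← Complex.ofReal_cos, ← Complex.ofReal_sinh, ← Complex.ofReal_cosh]
  have h1 := Real.sin_sq_add_cos_sq (Real.pi * a)
  have h2 := Real.cosh_sq (Real.pi * b)
  have hor : Real.sin (Real.pi * a) ^ 2 = 0 ∨ 1 ≤ Real.sinh (Real.pi * b) ^ 2 := by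
    rcases hz with h | h
    · left
      have h' : |a| = N := h
      rcases eq_or_eq_neg_of_abs_eq h' with h | h
      · rw [h, mul_comm, Real.sin_nat_mul_pi]; norm_num
      · rw [h, mul_neg, Real.sin_neg, mul_comm, Real.sin_nat_mul_pi]; norm_num
    · right
      have h' : |b| = N := h
      have hN' : (1 : ℝ) ≤ N := by exact_mod_cast hN
      have h3 : Real.pi ≤ Real.pi * |b| := by rw [h']; nlinarith
      have h4 : Real.pi * |b| ≤ Real.sinh (Real.pi * |b|) :=
        Real.self_le_sinh_iff.2 (by positivity)
      have h5 : Real.sinh (Real.pi * |b|) ^ 2 = Real.sinh (Real.pi * b) ^ 2 := by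
        rcases abs_choice b with h | h <;> rw [h]
        rw [mul_neg, Real.sinh_neg, neg_sq]
      rw [← h5]
      have := Real.pi_gt_three
      nlinarith
  generalize Real.sin (Real.pi * a) = S at *
  generalize Real.cos (Real.pi * a) = C at *
  generalize Real.sinh (Real.pi * b) = sh at *
  generalize Real.cosh (Real.pi * b) = ch at *
  have e1 : ‖(S : ℂ) * ch + C * sh * Complex.I‖ ^ 2 = S ^ 2 + sh ^ 2 := by
    rw [Complex.sq_norm, Complex.normSq_apply]; simp
    linear_combination S ^ 2 * h2 + sh ^ 2 * h1
  have e2 : ‖(C : ℂ) * ch - S * sh * Complex.I‖ ^ 2 = C ^ 2 + sh ^ 2 := by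
    rw [Complex.sq_norm, Complex.normSq_apply]; simp
    linear_combination C ^ 2 * h2 + sh ^ 2 * h1
  refine abs_le_of_sq_le_sq' ?_ (by positivity) |>.2
  rw [mul_pow, e1, e2]
  rcases hor with h | h <;> nlinarith [sq_nonneg C, sq_nonneg sh]

lemma norm_koshNum_div_koshDen_le {p : ℝ} (hp : 0 < p) {z : ℂ} (hz : 4 * p ≤ ‖z‖)
    (h : ‖Complex.sin (Real.pi * z)‖ ≤ 2 * ‖Complex.cos (Real.pi * z)‖) :
    ‖koshNum p z / koshDen p z‖ ≤ 5 := by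
  rw [norm_div]
  refine div_le_of_le_mul₀ (norm_nonneg _) (by norm_num) ?_
  set S := ‖Complex.sin (Real.pi * z)‖
  set C := ‖Complex.cos (Real.pi * z)‖
  have hC : 0 ≤ C := norm_nonneg _
  have hS : 0 ≤ S := norm_nonneg _
  have hpn : ‖(p : ℂ)‖ = p := by simp [hp.le]
  have h1 : ‖koshNum p z‖ ≤ p * C + ‖z‖ * S := by
    refine (norm_sub_le _ _).trans_eq ?_
    rw [norm_mul, norm_mul, hpn]
  have h2 : ‖z‖ * C - p * S ≤ ‖koshDen p z‖ := by
    have := norm_sub_le_norm_add (z * Complex.cos (Real.pi * z)) (p * Complex.sin (Real.pi * z))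
    rw [norm_mul, norm_mul, hpn, add_comm] at this
    exact this
  have h3 : ‖z‖ * S ≤ ‖z‖ * (2 * C) := by gcongr
  have h4 : p * S ≤ p * (2 * C) := by gcongr
  have h5 : 4 * p * C ≤ ‖z‖ * C := by gcongr
  have h6 : 0 ≤ ‖z‖ * C := by positivity
  linarith

/-- `π koshNum / koshDen` minus its polar parts at `0, ±λ_1, …, ±λ_N`.  At these points themselves
the formula takes junk values; `exists_koshRem` provides the holomorphic extension. -/
noncomputable def koshRem (p : ℝ) (lam : ℕ → ℝ) (N : ℕ) (z : ℂ) : ℂ :=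
  Real.pi * koshNum p z / koshDen p z - (koshWtZero p / z +
    ∑ n ∈ Finset.range N, (koshWt p (lam (n + 1)) / (z - lam (n + 1)) +
      koshWt p (lam (n + 1)) / (z + lam (n + 1))))

lemma koshRem_neg (p : ℝ) (lam : ℕ → ℝ) (N : ℕ) (z : ℂ) :
    koshRem p lam N (-z) = -koshRem p lam N z := by
  have : ∀ n, (koshWt p (lam (n + 1)) : ℂ) / (-z - lam (n + 1)) +
      koshWt p (lam (n + 1)) / (-z + lam (n + 1)) = -(koshWt p (lam (n + 1)) / (z - lam (n + 1)) +
      koshWt p (lam (n + 1)) / (z + lam (n + 1))) := by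
    intro n
    rw [show -z - (lam (n + 1) : ℂ) = -(z + lam (n + 1)) by ring,
      show -z + (lam (n + 1) : ℂ) = -(z - lam (n + 1)) by ring, div_neg, div_neg]
    ring
  simp only [koshRem, koshNum_neg, koshDen_neg, this, Finset.sum_neg_distrib, div_neg]
  ring

lemma koshWt_mem {p : ℝ} (hp : 0 < p) (l : ℝ) : 0 ≤ koshWt p l ∧ koshWt p l ≤ 1 := by
  have hpi := Real.pi_pos
  refine ⟨by rw [koshWt]; positivity, ?_⟩
  rw [koshWt, div_le_one (by positivity)]
  have : 0 < p * (1 / Real.pi) := by positivity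
  nlinarith

lemma koshWtZero_mem {p : ℝ} (hp : 0 < p) : 0 ≤ koshWtZero p ∧ koshWtZero p ≤ 1 := by
  have hpi := Real.pi_pos
  refine ⟨by rw [koshWtZero]; positivity, ?_⟩
  rw [koshWtZero, div_le_one (by positivity)]
  have : 0 < 1 / (Real.pi * p) := by positivity
  linarith

lemma exists_koshRem {p : ℝ} (hp : 0 < p) {lam : ℕ → ℝ} (hlam : IsKoshliakov p lam) (N : ℕ) :
    ∃ g : ℂ → ℂ, DifferentiableOn ℂ g {z : ℂ | |z.re| < N + 1 / 2} ∧
      ∀ z : ℂ, |z.re| < N + 1 / 2 → z ∉ koshZeros lam N → g z = koshRem p lam N z := by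
  have hU : IsOpen {z : ℂ | |z.re| < N + 1 / 2} :=
    isOpen_lt (by fun_prop) continuous_const
  have hT : ∀ P : ℂ → Prop, P 0 → (∀ n < N, P (lam (n + 1)) ∧ P (-lam (n + 1))) →
      ∀ μ ∈ koshZeros lam N, P μ := by
    intro P h0 h1 μ hμ
    simp only [koshZeros, Finset.mem_insert, Finset.mem_union, Finset.mem_image,
      Finset.mem_range] at hμ
    rcases hμ with rfl | ⟨n, hn, rfl⟩ | ⟨n, hn, rfl⟩
    exacts [h0, (h1 n hn).1, (h1 n hn).2]
  obtain ⟨g, hg, hgz⟩ := partial_fractions hU (koshZeros lam N) (fun z => Real.pi * koshNum p z)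
    (koshDen p) (by unfold koshNum; fun_prop)
    (fun z _ => (hasDerivAt_koshDen p z).differentiableAt.differentiableWithinAt)
    (by
      apply hT
      · simp only [mem_ofPred_eq, Complex.zero_re, abs_zero]; positivity
      · intro n hn
        have h1 := lam_pos hlam n
        have h2 := (hlam (n + 1) (by omega)).2.1
        have h3 : ((n + 1 : ℕ) : ℝ) ≤ N := by exact_mod_cast hn
        have h4 : |lam (n + 1)| < N + 1 / 2 := by rw [abs_of_pos h1]; linarith
        simp only [mem_ofPred_eq, Complex.neg_re, Complex.ofReal_re, abs_neg]
        exact ⟨h4, h4⟩)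
    (by
      apply hT
      · exact koshDen_zero p
      · intro n hn
        rw [koshDen_neg, koshDen_lam hp hlam n]; simp)
    (by
      apply hT
      · exact (deriv_koshDen_zero hp).1
      · intro n hn
        rw [deriv_koshDen_neg]
        exact ⟨(deriv_koshDen_lam hp hlam n).1, (deriv_koshDen_lam hp hlam n).1⟩)
    (fun z hz hzT h0 => hzT (mem_koshZeros hp hlam hz h0))
  refine ⟨g, hg, fun z hz hzT => ?_⟩
  rw [hgz z hz hzT, sum_koshZeros hlam, koshRem]
  simp only [deriv_koshDen_neg, koshNum_neg, (deriv_koshDen_zero hp).2,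
    (deriv_koshDen_lam hp hlam _).2, sub_zero, sub_neg_eq_add]

/-- The distance from `λ_{n+1}` to `N` is at least `(N - n) / 4`.  Only `n + 1 = N` is not immediate:
if `λ_N > N - 1/4` then `tan πλ_N > -1`, contradicting `tan πλ_N = -λ_N / p` as `λ_N > p`. -/
lemma lam_gap {p : ℝ} (hp : 0 < p) {lam : ℕ → ℝ} (hlam : IsKoshliakov p lam) {N n : ℕ}
    (hN : p + 1 ≤ N) (hn : n < N) : ((N : ℝ) - n) / 4 ≤ N - lam (n + 1) := by
  have hpi := Real.pi_pos
  obtain ⟨h1, h2, h3⟩ := hlam (n + 1) (by omega)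
  push_cast at h1 h2
  rcases Nat.lt_or_ge (n + 1) N with h | h
  · have h4 : ((n + 1 + 1 : ℕ) : ℝ) ≤ N := by exact_mod_cast h
    push_cast at h4
    linarith
  · have h4 : (N : ℝ) = n + 1 := by exact_mod_cast (by omega : N = n + 1)
    by_contra hcon
    push Not at hcon
    have h5 : Real.tan (Real.pi * lam (n + 1) - (n + 1 : ℕ) * Real.pi) = -(lam (n + 1)) / p := by
      rw [Real.tan_sub_nat_mul_pi, h3]
    have h6 : Real.tan (-(Real.pi / 4)) <
        Real.tan (Real.pi * lam (n + 1) - (n + 1 : ℕ) * Real.pi) := by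
      push_cast
      refine Real.strictMonoOn_tan ⟨by linarith, by linarith⟩ ⟨by nlinarith, by nlinarith⟩ ?_
      nlinarith
    rw [h5, Real.tan_neg, Real.tan_pi_div_four, lt_div_iff₀ hp] at h6
    linarith

/-- The remainder is `O(log N)` on the boundary of the square `|Re z|, |Im z| ≤ N`. -/
lemma koshRem_bound {p : ℝ} (hp : 0 < p) {lam : ℕ → ℝ} (hlam : IsKoshliakov p lam) {N : ℕ}
    (hN : p + 1 ≤ N) (hN4 : 4 * p ≤ N) {z : ℂ} (hz : |z.re| = N ∨ |z.im| = N) :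
    z ∉ koshZeros lam N ∧
    ‖koshRem p lam N z‖ ≤ Real.pi * 5 + (1 + 8 * (harmonic N : ℝ)) := by
  have hpi := Real.pi_pos
  have hN1 : (1 : ℝ) ≤ N := by linarith
  have hzN : (N : ℝ) ≤ ‖z‖ := by
    rcases hz with h | h
    · rw [← h]; exact Complex.abs_re_le_norm z
    · rw [← h]; exact Complex.abs_im_le_norm z
  have hd : ∀ l : ℝ, (N : ℝ) - |l| ≤ ‖z - l‖ := by
    intro l
    rcases hz with h | h
    · have h1 := Complex.abs_re_le_norm (z - l)
      simp only [Complex.sub_re, Complex.ofReal_re] at h1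
      have := abs_sub_abs_le_abs_sub z.re l
      linarith
    · have h1 := Complex.abs_im_le_norm (z - l)
      simp only [Complex.sub_im, Complex.ofReal_im, sub_zero] at h1
      linarith [abs_nonneg l]
  have hgap : ∀ n < N, ((N : ℝ) - n) / 4 ≤ ‖z - lam (n + 1)‖ ∧
      ((N : ℝ) - n) / 4 ≤ ‖z + lam (n + 1)‖ ∧ 0 < ((N : ℝ) - n) / 4 := by
    intro n hn
    have h0 := lam_gap hp hlam hN hn
    have h1 := hd (lam (n + 1))
    have h2 := hd (-lam (n + 1))
    rw [abs_neg] at h2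
    rw [abs_of_pos (lam_pos hlam n)] at h1 h2
    push_cast at h2
    rw [sub_neg_eq_add] at h2
    have h3 : (n : ℝ) < N := by exact_mod_cast hn
    exact ⟨by linarith, by linarith, by linarith⟩
  constructor
  · intro hmem
    simp only [koshZeros, Finset.mem_insert, Finset.mem_union, Finset.mem_image,
      Finset.mem_range] at hmem
    rcases hmem with rfl | ⟨n, hn, rfl⟩ | ⟨n, hn, rfl⟩
    · rw [norm_zero] at hzN; linarith
    · have := hgap n hn; rw [sub_self, norm_zero] at this; linarith
    · have := hgap n hn; rw [neg_add_cancel, norm_zero] at this; linarith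
  · rw [koshRem]
    refine (norm_sub_le _ _).trans (add_le_add ?_ ((norm_add_le _ _).trans (add_le_add ?_ ?_)))
    · rw [mul_div_assoc, norm_mul, Complex.norm_real, Real.norm_of_nonneg hpi.le]
      gcongr
      exact norm_koshNum_div_koshDen_le hp (hN4.trans hzN)
        (norm_sin_le_two_norm_cos (by exact_mod_cast hN1) hz)
    · rw [norm_div, Complex.norm_real, Real.norm_of_nonneg (koshWtZero_mem hp).1]
      rw [div_le_one (by linarith)]
      exact (koshWtZero_mem hp).2.trans (hN1.trans hzN)
    · have hterm : ∀ n ∈ Finset.range N, ‖(koshWt p (lam (n + 1)) : ℂ) / (z - lam (n + 1)) +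
          koshWt p (lam (n + 1)) / (z + lam (n + 1))‖ ≤
          8 * (((N - 1 - n : ℕ) : ℝ) + 1)⁻¹ := by
        intro n hn
        have hn' := Finset.mem_range.1 hn
        obtain ⟨g1, g2, g3⟩ := hgap n hn'
        obtain ⟨w0, w1⟩ := koshWt_mem hp (lam (n + 1))
        have e : (((N - 1 - n : ℕ) : ℝ) + 1) = N - n := by
          rw [eq_sub_iff_add_eq]; exact_mod_cast (by omega : N - 1 - n + 1 + n = N)
        rw [e]
        have b1 : ‖(koshWt p (lam (n + 1)) : ℂ) / (z - lam (n + 1))‖ ≤ 1 / (((N : ℝ) - n) / 4) := by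
          rw [norm_div, Complex.norm_real, Real.norm_of_nonneg w0]
          gcongr
        have b2 : ‖(koshWt p (lam (n + 1)) : ℂ) / (z + lam (n + 1))‖ ≤ 1 / (((N : ℝ) - n) / 4) := by
          rw [norm_div, Complex.norm_real, Real.norm_of_nonneg w0]
          gcongr
        refine (norm_add_le _ _).trans ((add_le_add b1 b2).trans_eq ?_)
        have : (N : ℝ) - n ≠ 0 := by linarith
        field_simp; norm_num
      refine (norm_sum_le _ _).trans ((Finset.sum_le_sum hterm).trans_eq ?_)
      rw [← Finset.mul_sum, Finset.sum_range_reflect (fun j : ℕ => ((j : ℝ) + 1)⁻¹) N]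
      congr 1
      simp [harmonic]

/-- The bound of `koshRem_bound` extends to the square by the maximum principle; the Schwarz lemma on
the disc of radius `N`, applied at `±it` together with oddness, gains the factor `t / N`. -/
lemma koshRem_le {p : ℝ} (hp : 0 < p) {lam : ℕ → ℝ} (hlam : IsKoshliakov p lam) {N : ℕ}
    (hN : p + 1 ≤ N) (hN4 : 4 * p ≤ N) {t : ℝ} (ht : 0 < t) (htN : t < N) :
    ‖koshRem p lam N (t * Complex.I)‖ ≤
      2 * (Real.pi * 5 + (1 + 8 * (harmonic N : ℝ))) / N * t := by
  obtain ⟨g, hg, hgz⟩ := exists_koshRem hp hlam N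
  set B := Real.pi * 5 + (1 + 8 * (harmonic N : ℝ))
  have hN0 : (0 : ℝ) < N := by linarith
  set Q : Set ℂ := Ioo (-(N : ℝ)) N ×ℂ Ioo (-(N : ℝ)) N
  have hne : (-(N : ℝ)) ≠ N := by linarith
  have hlt : (-(N : ℝ)) < N := by linarith
  have hcl : closure Q ⊆ {z : ℂ | |z.re| < N + 1 / 2} := by
    rw [Complex.closure_reProdIm, closure_Ioo hne]
    intro z hz
    have : |z.re| ≤ N := abs_le.2 hz.1
    simp only [mem_ofPred_eq]
    linarith
  have hfront : ∀ z ∈ frontier Q, ‖g z‖ ≤ B := by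
    intro z hz
    have hz1 := hcl (frontier_subset_closure hz)
    have hz2 : |z.re| = N ∨ |z.im| = N := by
      rw [Complex.frontier_reProdIm, frontier_Ioo hlt] at hz
      rcases hz with hz | hz
      · right
        rcases hz.2 with h | h
        · rw [show z.im = -N from h, abs_neg, abs_of_pos hN0]
        · rw [show z.im = N from h, abs_of_pos hN0]
      · left
        rcases hz.1 with h | h
        · rw [show z.re = -N from h, abs_neg, abs_of_pos hN0]
        · rw [show z.re = N from h, abs_of_pos hN0]
    obtain ⟨hT, hb⟩ := koshRem_bound hp hlam hN hN4 hz2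
    rw [hgz z hz1 hT]
    exact hb
  have hbd : ∀ z ∈ closure Q, ‖g z‖ ≤ B := fun z hz =>
    Complex.norm_le_of_forall_mem_frontier_norm_le
      ((Metric.isBounded_Ioo _ _).reProdIm (Metric.isBounded_Ioo _ _))
      (hg.mono hcl).diffContOnCl hfront hz
  have hball : Metric.ball (0 : ℂ) N ⊆ closure Q := by
    intro z hz
    rw [mem_ball_zero_iff] at hz
    apply subset_closure
    exact ⟨abs_lt.1 ((Complex.abs_re_le_norm z).trans_lt hz),
      abs_lt.1 ((Complex.abs_im_le_norm z).trans_lt hz)⟩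
  have h0 : (0 : ℂ) ∈ Metric.ball (0 : ℂ) N := Metric.mem_ball_self hN0
  have hS : ∀ z ∈ Metric.ball (0 : ℂ) N, dist (g z) (g 0) ≤ 2 * B / N * dist z 0 := by
    intro z hz
    refine Complex.dist_le_div_mul_dist_of_mapsTo_ball (hg.mono (hball.trans hcl)) ?_ hz
    intro w hw
    rw [Metric.mem_closedBall, dist_eq_norm]
    refine (norm_sub_le _ _).trans ?_
    linarith [hbd w (hball hw), hbd 0 (hball h0)]
  set z : ℂ := t * Complex.I with hzdef
  have hzn : ‖z‖ = t := by simp [hzdef, ht.le]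
  have hz1 : z ∈ Metric.ball (0 : ℂ) N := by rw [mem_ball_zero_iff, hzn]; exact htN
  have hz2 : -z ∈ Metric.ball (0 : ℂ) N := by rw [mem_ball_zero_iff, norm_neg, hzn]; exact htN
  have him : ∀ μ ∈ koshZeros lam N, μ.im = 0 := by
    intro μ hμ
    simp only [koshZeros, Finset.mem_insert, Finset.mem_union, Finset.mem_image,
      Finset.mem_range] at hμ
    rcases hμ with rfl | ⟨n, hn, rfl⟩ | ⟨n, hn, rfl⟩ <;> simp
  have hzT : z ∉ koshZeros lam N := fun h => ht.ne' (by simpa [hzdef] using him z h)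
  have hzT' : -z ∉ koshZeros lam N := fun h => ht.ne' (by simpa [hzdef] using him (-z) h)
  have e1 := hgz z (hcl (hball hz1)) hzT
  have e2 := hgz (-z) (hcl (hball hz2)) hzT'
  rw [koshRem_neg] at e2
  have d1 := hS z hz1
  have d2 := hS (-z) hz2
  rw [dist_zero_right, hzn] at d1
  rw [dist_zero_right, norm_neg, hzn, dist_comm] at d2
  have d3 := dist_triangle (g z) (g 0) (g (-z))
  rw [e1, e2, dist_eq_norm (koshRem p lam N z) (-koshRem p lam N z), sub_neg_eq_add, ← two_mul,
    norm_mul, ← e2] at d3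
  rw [← e1]
  rw [← e1] at d3
  norm_num at d3
  linarith

/-- The partial fraction expansion of `π koshNum / koshDen` on the imaginary axis, at `z = it`. -/
lemma hasSum_kosh {p : ℝ} (hp : 0 < p) {lam : ℕ → ℝ} (hlam : IsKoshliakov p lam) {t : ℝ}
    (ht : 0 < t) (htp : t ≠ p) :
    HasSum (fun n => koshWt p (lam (n + 1)) * (2 * t / (t ^ 2 + lam (n + 1) ^ 2)))
      (Real.pi * (1 + 2 * (1 / ((p + t) / (p - t) * Real.exp (2 * Real.pi * t) - 1)))
        - koshWtZero p / t) := by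
  rw [hasSum_iff_tendsto_nat_of_nonneg]
  swap
  · intro n
    have := (koshWt_mem hp (lam (n + 1))).1
    positivity
  set L := Real.pi * (1 + 2 * (1 / ((p + t) / (p - t) * Real.exp (2 * Real.pi * t) - 1)))
        - koshWtZero p / t with hL
  have hrem : ∀ N, koshRem p lam N (t * Complex.I) = -Complex.I * ((L - ∑ n ∈ Finset.range N,
      koshWt p (lam (n + 1)) * (2 * t / (t ^ 2 + lam (n + 1) ^ 2)) : ℝ) : ℂ) := by
    intro N
    have htc : (t : ℂ) ≠ 0 := by exact_mod_cast ht.ne'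
    have hterm : ∀ n, (koshWt p (lam (n + 1)) : ℂ) / (t * Complex.I - lam (n + 1)) +
        koshWt p (lam (n + 1)) / (t * Complex.I + lam (n + 1)) =
        -Complex.I * ((koshWt p (lam (n + 1)) * (2 * t / (t ^ 2 + lam (n + 1) ^ 2)) : ℝ) : ℂ) := by
      intro n
      generalize koshWt p (lam (n + 1)) = w
      generalize lam (n + 1) = l
      have n1 : (t : ℂ) * Complex.I - l ≠ 0 := fun h => ht.ne' (by simpa using congrArg Complex.im h)
      have n2 : (t : ℂ) * Complex.I + l ≠ 0 := fun h => ht.ne' (by simpa using congrArg Complex.im h)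
      have n3 : (t : ℂ) ^ 2 + l ^ 2 ≠ 0 := by
        exact_mod_cast (by positivity : (t ^ 2 + l ^ 2 : ℝ) ≠ 0)
      push_cast
      field_simp
      linear_combination (2 * (t : ℂ) * w * Complex.I * t ^ 2) * Complex.I_sq
    have hmain : (Real.pi : ℂ) * koshNum p (t * Complex.I) / koshDen p (t * Complex.I) =
        -Complex.I * ((Real.pi * (1 + 2 * (1 / ((p + t) / (p - t) *
          Real.exp (2 * Real.pi * t) - 1))) : ℝ) : ℂ) := by
      set E := Real.exp (Real.pi * t)
      have hE : 0 < E := Real.exp_pos _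
      have hE2 : Real.exp (2 * Real.pi * t) = E ^ 2 := by
        rw [← Real.exp_nat_mul]; congr 1; push_cast; ring
      have hsh : Real.sinh (Real.pi * t) = (E - E⁻¹) / 2 := by
        rw [Real.sinh_eq, Real.exp_neg]
      have hch : Real.cosh (Real.pi * t) = (E + E⁻¹) / 2 := by
        rw [Real.cosh_eq, Real.exp_neg]
      have hE1 : 1 < E := Real.one_lt_exp_iff.2 (by positivity)
      have hden : 0 < (p + t) * E ^ 2 - (p - t) := by
        have : 0 < (p + t) * (E ^ 2 - 1) := mul_pos (by positivity) (by nlinarith)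
        linarith
      have harg : (Real.pi : ℂ) * (t * Complex.I) = ((Real.pi * t : ℝ) : ℂ) * Complex.I := by
        push_cast; ring
      have hnum : koshNum p (t * Complex.I) =
          ((p * Real.cosh (Real.pi * t) + t * Real.sinh (Real.pi * t) : ℝ) : ℂ) := by
        rw [koshNum, harg, Complex.sin_mul_I, Complex.cos_mul_I, ← Complex.ofReal_sinh,
          ← Complex.ofReal_cosh]
        push_cast
        linear_combination (-(t : ℂ) * Complex.sinh (Real.pi * t)) * Complex.I_sq
      have hde : koshDen p (t * Complex.I) =
          ((p * Real.sinh (Real.pi * t) + t * Real.cosh (Real.pi * t) : ℝ) : ℂ) * Complex.I := by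
        rw [koshDen, harg, Complex.sin_mul_I, Complex.cos_mul_I, ← Complex.ofReal_sinh,
          ← Complex.ofReal_cosh]
        push_cast
        ring
      have hreal : Real.pi * (p * Real.cosh (Real.pi * t) + t * Real.sinh (Real.pi * t)) /
          (p * Real.sinh (Real.pi * t) + t * Real.cosh (Real.pi * t)) =
          Real.pi * (1 + 2 * (1 / ((p + t) / (p - t) * Real.exp (2 * Real.pi * t) - 1))) := by
        have hpt : p - t ≠ 0 := sub_ne_zero.2 htp.symm
        have r1 : (p + t) / (p - t) * E ^ 2 - 1 = ((p + t) * E ^ 2 - (p - t)) / (p - t) := by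
          field_simp
        have r2 : p * ((E - E⁻¹) / 2) + t * ((E + E⁻¹) / 2) =
            ((p + t) * E ^ 2 - (p - t)) / (2 * E) := by
          field_simp; ring
        have r3 : p * ((E + E⁻¹) / 2) + t * ((E - E⁻¹) / 2) =
            ((p + t) * E ^ 2 + (p - t)) / (2 * E) := by
          field_simp; ring
        rw [hE2, hsh, hch, r1, r2, r3, one_div_div]
        field_simp
        ring
      rw [← hreal, hnum, hde, ← div_div, Complex.div_I]
      push_cast; ring
    rw [koshRem, hmain, Finset.sum_congr rfl (fun n _ => hterm n), ← Finset.mul_sum, hL]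
    have : (koshWtZero p : ℂ) / (t * Complex.I) = -Complex.I * ((koshWtZero p / t : ℝ) : ℂ) := by
      rw [← div_div, Complex.div_I]; push_cast; ring
    rw [this]
    push_cast
    ring
  have hlim : Tendsto (fun N : ℕ => 2 * (Real.pi * 5 + (1 + 8 * (harmonic N : ℝ))) / N * t)
      atTop (𝓝 0) := by
    have hlog : Tendsto (fun N : ℕ => Real.log N / N) atTop (𝓝 0) := by
      have := Real.isLittleO_log_id_atTop.tendsto_div_nhds_zero.comp tendsto_natCast_atTop_atTop
      exact this
    have hinv : Tendsto (fun N : ℕ => (1 : ℝ) / N) atTop (𝓝 0) := tendsto_one_div_atTop_nhds_zero_nat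
    have hup : Tendsto (fun N : ℕ => (2 * (Real.pi * 5 + 9) * t) * ((1 : ℝ) / N) +
        16 * t * (Real.log N / N)) atTop (𝓝 0) := by
      simpa using (hinv.const_mul (2 * (Real.pi * 5 + 9) * t)).add (hlog.const_mul (16 * t))
    refine squeeze_zero (fun N => ?_) (fun N => ?_) hup
    · have : (0 : ℝ) ≤ (harmonic N : ℝ) := by
        simp only [harmonic]; push_cast; exact Finset.sum_nonneg fun i _ => by positivity
      have := Real.pi_pos
      positivity
    · have h := harmonic_le_one_add_log N
      calc 2 * (Real.pi * 5 + (1 + 8 * (harmonic N : ℝ))) / N * t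
          ≤ 2 * (Real.pi * 5 + (1 + 8 * (1 + Real.log N))) / N * t := by gcongr
        _ = _ := by ring
  have hlim2 : Tendsto (fun N : ℕ => L - ∑ n ∈ Finset.range N,
      koshWt p (lam (n + 1)) * (2 * t / (t ^ 2 + lam (n + 1) ^ 2))) atTop (𝓝 0) := by
    refine squeeze_zero_norm' ?_ hlim
    have hlarge : ∀ c : ℝ, ∀ᶠ N : ℕ in atTop, c ≤ N := fun c =>
      tendsto_natCast_atTop_atTop.eventually_ge_atTop c
    filter_upwards [hlarge (p + 1), hlarge (4 * p), hlarge (t + 1)] with N h1 h2 h3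
    have := koshRem_le hp hlam h1 h2 ht (by linarith)
    rwa [hrem N, norm_mul, norm_neg, Complex.norm_I, one_mul, Complex.norm_real] at this
  have := hlim2.const_sub L
  simpa using this

/-! ### Integrating the expansion term by term -/

lemma ofReal_sq_cpow {r : ℝ} (hr : 0 < r) (s : ℂ) :
    ((r ^ 2 : ℝ) : ℂ) ^ s = (r : ℂ) ^ (2 * s) := by
  have hc : (r : ℂ) ≠ 0 := by exact_mod_cast hr.ne'
  rw [pow_two, Complex.ofReal_mul, Complex.mul_cpow_ofReal_nonneg hr.le hr.le,
    ← Complex.cpow_add _ _ hc, two_mul]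

lemma norm_ofReal_cpow {r : ℝ} (hr : 0 < r) (s : ℂ) :
    ((‖(r : ℂ) ^ s‖ : ℝ) : ℂ) = (r : ℂ) ^ ((s.re : ℝ) : ℂ) := by
  rw [Complex.norm_cpow_eq_rpow_re_of_pos hr, Complex.ofReal_cpow hr.le]

/-- The integrand of `stieltjes_term` in absolute value is the same integrand with `Re s` in place of
`s`, so its integral is a constant times `(l² + x²)^{-Re s}`. -/
lemma integral_norm_stieltjes_term (x : ℝ) (hx : 0 < x) (s : ℂ) (hs0 : 0 < s.re) (hs1 : s.re < 1) :
    ∃ C : ℝ, ∀ l : ℝ, ∫ y in Ioi (0 : ℝ), ‖(y : ℂ) ^ (-s) * ((y + 1 : ℝ) : ℂ) ^ (-s) *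
      ((2 * ((2 * y + 1) * x) / (((2 * y + 1) * x) ^ 2 + l ^ 2) : ℝ) : ℂ)‖ =
      C * (l ^ 2 + x ^ 2) ^ (-s.re) := by
  refine ⟨‖((1 / (2 * x) : ℝ) : ℂ) * ((4 * x ^ 2 : ℝ) : ℂ) ^ ((s.re : ℝ) : ℂ) *
    (Real.pi / Complex.sin (Real.pi * ((s.re : ℝ) : ℂ)))‖, fun l => ?_⟩
  have h := (stieltjes_term x l hx ((s.re : ℝ) : ℂ) (by simpa using hs0) (by simpa using hs1)).2
  have hcast : ((∫ y in Ioi (0 : ℝ), ‖(y : ℂ) ^ (-s) * ((y + 1 : ℝ) : ℂ) ^ (-s) *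
      ((2 * ((2 * y + 1) * x) / (((2 * y + 1) * x) ^ 2 + l ^ 2) : ℝ) : ℂ)‖ : ℝ) : ℂ) =
      ∫ y in Ioi (0 : ℝ), (y : ℂ) ^ (-((s.re : ℝ) : ℂ)) * ((y + 1 : ℝ) : ℂ) ^ (-((s.re : ℝ) : ℂ)) *
      ((2 * ((2 * y + 1) * x) / (((2 * y + 1) * x) ^ 2 + l ^ 2) : ℝ) : ℂ) := by
    rw [← integral_complex_ofReal]
    refine setIntegral_congr_fun measurableSet_Ioi fun y hy => ?_
    have hy0 : 0 < y := hy
    have hpos : 0 ≤ 2 * ((2 * y + 1) * x) / (((2 * y + 1) * x) ^ 2 + l ^ 2) := by positivity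
    simp only [norm_mul, Complex.ofReal_mul (‖_‖ * ‖_‖), Complex.ofReal_mul ‖_‖]
    rw [norm_ofReal_cpow hy0, norm_ofReal_cpow (by linarith : 0 < y + 1), Complex.norm_real,
      Real.norm_of_nonneg hpos]
    simp
  rw [h] at hcast
  have hn := congrArg norm hcast
  rw [Complex.norm_real, Real.norm_of_nonneg (integral_nonneg fun _ => norm_nonneg _)] at hn
  rw [hn, norm_mul _ (((l ^ 2 + x ^ 2 : ℝ) : ℂ) ^ _),
    Complex.norm_cpow_eq_rpow_re_of_pos (by positivity)]
  simp

lemma summable_lam_rpow {p : ℝ} {lam : ℕ → ℝ} (hlam : IsKoshliakov p lam) (x : ℝ) {r : ℝ}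
    (hr : 1 / 2 < r) : Summable fun n => (lam (n + 1) ^ 2 + x ^ 2) ^ (-r) := by
  have h0 : Summable fun n : ℕ => (2 : ℝ) ^ (2 * r) * ((n + 1 : ℕ) : ℝ) ^ (-(2 * r)) :=
    ((summable_nat_add_iff 1).2 (Real.summable_nat_rpow.2 (by linarith))).mul_left _
  refine h0.of_nonneg_of_le (fun n => by positivity) fun n => ?_
  have h1 : ((n + 1 : ℕ) : ℝ) / 2 ≤ lam (n + 1) := by
    have := (hlam (n + 1) (by omega)).1
    have hn : (0 : ℝ) ≤ n := n.cast_nonneg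
    push_cast at this ⊢
    linarith
  have h2 : 0 < ((n + 1 : ℕ) : ℝ) / 2 := by positivity
  calc (lam (n + 1) ^ 2 + x ^ 2) ^ (-r) ≤ ((((n + 1 : ℕ) : ℝ) / 2) ^ 2) ^ (-r) := by
        refine Real.rpow_le_rpow_of_nonpos (by positivity) ?_ (by linarith)
        nlinarith [sq_nonneg x]
    _ = _ := by
        rw [← Real.rpow_natCast, ← Real.rpow_mul h2.le, Real.div_rpow (by positivity) (by norm_num),
          Nat.cast_ofNat, mul_neg, Real.rpow_neg (by norm_num : (0 : ℝ) ≤ 2)]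
        field_simp

/-- The kernel `1 / (σ(t) e^{2πt} - 1)` is bounded on `t ≥ x > 0`.  At `t = p` division by zero gives
the value `-1`, whence the summand `1` in the bound. -/
lemma norm_kernel_le {p t x : ℝ} (hp : 0 < p) (hx : 0 < x) (hxt : x ≤ t) :
    |1 / ((p + t) / (p - t) * Real.exp (2 * Real.pi * t) - 1)| ≤ 1 / (2 * Real.pi * x) + 1 := by
  have hpi := Real.pi_pos
  have ht : 0 < t := hx.trans_le hxt
  rcases eq_or_ne (p - t) 0 with h | h
  · rw [h]; simp; positivity
  · have hE := Real.add_one_le_exp (2 * Real.pi * t)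
    set E := Real.exp (2 * Real.pi * t)
    have hden : (p + t) * (2 * Real.pi * x) ≤ (p + t) * E - (p - t) := by
      have : (p + t) * (2 * Real.pi * x + 1) ≤ (p + t) * E := by
        gcongr
        nlinarith
      linarith
    have hpos : 0 < (p + t) * (2 * Real.pi * x) := by positivity
    have r1 : (p + t) / (p - t) * E - 1 = ((p + t) * E - (p - t)) / (p - t) := by
      field_simp
    rw [r1, one_div_div, abs_div, abs_of_pos (hpos.trans_le hden)]
    have hab : |p - t| ≤ p + t := abs_le.2 ⟨by linarith, by linarith⟩
    calc |p - t| / ((p + t) * E - (p - t)) ≤ (p + t) / ((p + t) * (2 * Real.pi * x)) := by gcongr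
      _ = 1 / (2 * Real.pi * x) := by field_simp
      _ ≤ _ := by linarith

/-- The integral of `y^{-s} (y+1)^{-s}` against the expansion `hasSum_kosh` at `t = (2y+1)x`.  Every
series term is evaluated by `stieltjes_term`, as is the term `w_0 / t`, which is half of the `l = 0`
instance. -/
lemma kosh_integral_identity {p : ℝ} (hp : 0 < p) {lam : ℕ → ℝ} (hlam : IsKoshliakov p lam)
    {x : ℝ} (hx : 0 < x) {s : ℂ} (hs₁ : 1 / 2 < s.re) (hs₂ : s.re < 1) :
    (((1 / (2 * x) : ℝ) : ℂ) * ((4 * x ^ 2 : ℝ) : ℂ) ^ s *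
      (Real.pi / Complex.sin (Real.pi * s))) *
      (∑' n : ℕ, (koshWt p (lam (n + 1)) : ℂ) * ((lam (n + 1) ^ 2 + x ^ 2 : ℝ) : ℂ) ^ (-s)) =
    Real.pi * (Complex.Gamma (1 - s) * Complex.Gamma (2 * s - 1) / Complex.Gamma s)
    + 2 * Real.pi * (∫ y in Ioi (0 : ℝ), (y : ℂ) ^ (-s) * ((y + 1 : ℝ) : ℂ) ^ (-s) /
              (((p + (2 * y + 1) * x) / (p - (2 * y + 1) * x) *
                  Real.exp (2 * Real.pi * (2 * y + 1) * x) - 1 : ℝ) : ℂ))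
    - koshWtZero p / 2 * ((((1 / (2 * x) : ℝ) : ℂ) * ((4 * x ^ 2 : ℝ) : ℂ) ^ s *
      (Real.pi / Complex.sin (Real.pi * s))) * ((x ^ 2 : ℝ) : ℂ) ^ (-s)) := by
  have hs0 : 0 < s.re := by linarith
  set Cst : ℂ := ((1 / (2 * x) : ℝ) : ℂ) * ((4 * x ^ 2 : ℝ) : ℂ) ^ s *
      (Real.pi / Complex.sin (Real.pi * s)) with hCst
  set φ : ℝ → ℂ := fun y => (y : ℂ) ^ (-s) * ((y + 1 : ℝ) : ℂ) ^ (-s) with hφ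
  set q : ℝ → ℝ → ℝ := fun l y => 2 * ((2 * y + 1) * x) / (((2 * y + 1) * x) ^ 2 + l ^ 2) with hq
  set K : ℝ → ℝ := fun y => 1 / ((p + (2 * y + 1) * x) / (p - (2 * y + 1) * x) *
    Real.exp (2 * Real.pi * (2 * y + 1) * x) - 1) with hK
  have hterm : ∀ l, IntegrableOn (fun y => φ y * (q l y : ℂ)) (Ioi 0) ∧
      ∫ y in Ioi (0 : ℝ), φ y * (q l y : ℂ) = Cst * ((l ^ 2 + x ^ 2 : ℝ) : ℂ) ^ (-s) :=
    fun l => stieltjes_term x l hx s hs0 hs₂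
  have hφint : IntegrableOn φ (Ioi 0) ∧ ∫ y in Ioi (0 : ℝ), φ y =
      Complex.Gamma (1 - s) * Complex.Gamma (2 * s - 1) / Complex.Gamma s := by
    have h := beta_Ioi (1 - s) (2 * s - 1) (by simpa using hs₂) (by simp; linarith)
    rw [show 1 - s - 1 = -s by ring, show 1 - s + (2 * s - 1) = s by ring] at h
    simpa only [hφ, add_comm (1 : ℝ)] using h
  have hφK : IntegrableOn (fun y => φ y * (K y : ℂ)) (Ioi 0) := by
    refine hφint.1.mul_bdd (c := 1 / (2 * Real.pi * x) + 1) ?_ ?_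
    · have : Measurable K := by simp only [hK]; fun_prop
      exact (Complex.measurable_ofReal.comp this).aestronglyMeasurable
    · refine (ae_restrict_iff' measurableSet_Ioi).2 (.of_forall fun y hy => ?_)
      have hy0 : 0 < y := hy
      rw [Complex.norm_real, Real.norm_eq_abs]
      have := norm_kernel_le hp hx (t := (2 * y + 1) * x) (by nlinarith)
      rwa [← mul_assoc (2 * Real.pi)] at this
  have hsum := hasSum_integral_of_summable_integral_norm (μ := volume.restrict (Ioi (0 : ℝ)))
    (F := fun (n : ℕ) y => (koshWt p (lam (n + 1)) : ℂ) * (φ y * (q (lam (n + 1)) y : ℂ)))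
    (fun n => (hterm _).1.const_mul _) (by
      obtain ⟨C, hC⟩ := integral_norm_stieltjes_term x hx s hs0 hs₂
      refine ((summable_lam_rpow hlam x hs₁).mul_left C).of_nonneg_of_le
        (fun n => integral_nonneg fun _ => norm_nonneg _) fun n => ?_
      have hw := koshWt_mem hp (lam (n + 1))
      simp only [norm_mul (koshWt p (lam (n + 1)) : ℂ), Complex.norm_real (koshWt _ _),
        Real.norm_of_nonneg hw.1]
      rw [integral_const_mul, ← hC]
      exact mul_le_of_le_one_left (integral_nonneg fun _ => norm_nonneg _) hw.2)
  have hae : ∀ᵐ y ∂(volume.restrict (Ioi (0 : ℝ))),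
      ∑' n : ℕ, (koshWt p (lam (n + 1)) : ℂ) * (φ y * (q (lam (n + 1)) y : ℂ)) =
      (Real.pi : ℂ) * φ y + 2 * Real.pi * (φ y * (K y : ℂ))
        - (koshWtZero p / 2 : ℂ) * (φ y * (q 0 y : ℂ)) := by
    -- The expansion fails at the single point `y` where `(2y+1)x = p`, a null set.
    have hne : ∀ᵐ y : ℝ ∂(volume.restrict (Ioi (0 : ℝ))), y ≠ (p / x - 1) / 2 :=
      ae_restrict_of_ae (Measure.ae_ne volume _)
    filter_upwards [hne, ae_restrict_mem measurableSet_Ioi] with y hy hy0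
    have hy0' : 0 < y := hy0
    have hT : 0 < (2 * y + 1) * x := by positivity
    have hTp : (2 * y + 1) * x ≠ p := by
      intro h
      apply hy
      rw [← h]
      field_simp
      ring
    have h := ((Complex.hasSum_ofReal.2 (hasSum_kosh hp hlam hT hTp)).mul_left (φ y)).tsum_eq
    have e : ∀ n : ℕ, (koshWt p (lam (n + 1)) : ℂ) * (φ y * (q (lam (n + 1)) y : ℂ)) =
        φ y * ((koshWt p (lam (n + 1)) * (2 * ((2 * y + 1) * x) /
          (((2 * y + 1) * x) ^ 2 + lam (n + 1) ^ 2)) : ℝ) : ℂ) := by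
      intro n; simp only [hq]; push_cast; ring
    rw [tsum_congr e, h]
    have e2 : koshWtZero p / ((2 * y + 1) * x) = koshWtZero p / 2 * q 0 y := by
      simp only [hq]; field_simp; ring
    rw [e2, ← mul_assoc (2 * Real.pi)]
    simp only [hK]
    push_cast
    ring
  rw [integral_congr_ae hae] at hsum
  have hadd : Integrable (fun y => (Real.pi : ℂ) * φ y + 2 * Real.pi * (φ y * (K y : ℂ)))
      (volume.restrict (Ioi 0)) := (hφint.1.const_mul _).add (hφK.const_mul _)
  rw [integral_sub hadd ((hterm 0).1.const_mul _),
    integral_add (hφint.1.const_mul _) (hφK.const_mul _), integral_const_mul, integral_const_mul,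
    integral_const_mul, hφint.2, (hterm 0).2] at hsum
  simp only [integral_const_mul, (hterm _).2] at hsum
  have hKeq : ∫ y in Ioi (0 : ℝ), φ y * (K y : ℂ) = ∫ y in Ioi (0 : ℝ), φ y /
      (((p + (2 * y + 1) * x) / (p - (2 * y + 1) * x) *
        Real.exp (2 * Real.pi * (2 * y + 1) * x) - 1 : ℝ) : ℂ) := by
    congr 1; ext y
    simp only [hK, Complex.ofReal_div, Complex.ofReal_one]
    ring
  rw [hKeq] at hsum
  rw [← tsum_mul_left, ← show (0 : ℝ) ^ 2 + x ^ 2 = x ^ 2 by ring, ← hsum.tsum_eq]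
  exact tsum_congr fun n => by ring_nf

theorem watson_formula_koshliakov_first_analogue
    (p : ℝ) (hp : 0 < p) (lam : ℕ → ℝ)
    (hlam : ∀ n : ℕ, 1 ≤ n → (n : ℝ) - 1 / 2 < lam n ∧ lam n < n ∧
      Real.tan (Real.pi * lam n) = -(lam n) / p)
    (x : ℝ) (hx : 0 < x) (s : ℂ) (hs₁ : 1 / 2 < s.re) (hs₂ : s.re < 1) :
    (∑' n : ℕ, (((p ^ 2 + lam (n + 1) ^ 2) / (p * (p + 1 / Real.pi) + lam (n + 1) ^ 2) : ℝ) : ℂ) *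
        ((lam (n + 1) ^ 2 + x ^ 2 : ℝ) : ℂ) ^ (-s)) =
      (Real.sqrt Real.pi : ℂ) * (x : ℂ) ^ (1 - 2 * s) / (2 * Complex.Gamma s) *
          Complex.Gamma (s - 1 / 2)
      - 1 / 2 * (x : ℂ) ^ (-(2 * s)) / ((1 + 1 / (Real.pi * p) : ℝ) : ℂ)
      + (2 : ℂ) ^ (2 - 2 * s) * (x : ℂ) ^ (1 - 2 * s) * Complex.sin (Real.pi * s) *
          ∫ y in Set.Ioi (0 : ℝ),
            (y : ℂ) ^ (-s) * ((y + 1 : ℝ) : ℂ) ^ (-s) /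
              (((p + (2 * y + 1) * x) / (p - (2 * y + 1) * x) *
                  Real.exp (2 * Real.pi * (2 * y + 1) * x) - 1 : ℝ) : ℂ) := by
  have key := kosh_integral_identity hp (lam := lam) hlam hx hs₁ hs₂
  simp only [koshWt] at key
  set I := ∫ y in Set.Ioi (0 : ℝ),
            (y : ℂ) ^ (-s) * ((y + 1 : ℝ) : ℂ) ^ (-s) /
              (((p + (2 * y + 1) * x) / (p - (2 * y + 1) * x) *
                  Real.exp (2 * Real.pi * (2 * y + 1) * x) - 1 : ℝ) : ℂ)
  set Z := ∑' n : ℕ,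
    (((p ^ 2 + lam (n + 1) ^ 2) / (p * (p + 1 / Real.pi) + lam (n + 1) ^ 2) : ℝ) : ℂ) *
        ((lam (n + 1) ^ 2 + x ^ 2 : ℝ) : ℂ) ^ (-s)
  have hxc : (x : ℂ) ≠ 0 := by exact_mod_cast hx.ne'
  have hpic : (Real.pi : ℂ) ≠ 0 := by exact_mod_cast Real.pi_ne_zero
  have h4 : ((4 * x ^ 2 : ℝ) : ℂ) ^ s = (2 : ℂ) ^ (2 * s) * (x : ℂ) ^ (2 * s) := by
    rw [show (4 * x ^ 2 : ℝ) = (2 * x) ^ 2 by ring, ofReal_sq_cpow (by positivity),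
      Complex.ofReal_mul, Complex.mul_cpow_ofReal_nonneg (by norm_num) hx.le]
    norm_num
  have hx2 : ((x ^ 2 : ℝ) : ℂ) ^ (-s) = ((x : ℂ) ^ (2 * s))⁻¹ := by
    rw [ofReal_sq_cpow hx, mul_neg, Complex.cpow_neg]
  have hx1 : (x : ℂ) ^ (1 - 2 * s) = x / (x : ℂ) ^ (2 * s) := by
    rw [Complex.cpow_sub _ _ hxc, Complex.cpow_one]
  have h22 : (2 : ℂ) ^ (2 - 2 * s) = 4 / (2 : ℂ) ^ (2 * s) := by
    rw [Complex.cpow_sub _ _ two_ne_zero]; norm_num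
  have hdup := Complex.Gamma_mul_Gamma_add_half (s - 1 / 2)
  rw [show s - 1 / 2 + 1 / 2 = s by ring, show 2 * (s - 1 / 2) = 2 * s - 1 by ring,
    show 1 - (2 * s - 1) = 2 - 2 * s by ring, h22] at hdup
  have hrefl := Complex.Gamma_mul_Gamma_one_sub s
  have hG : Complex.Gamma s ≠ 0 := Complex.Gamma_ne_zero_of_re_pos (by linarith)
  have hG1 : Complex.Gamma (1 - s) ≠ 0 := Complex.Gamma_ne_zero_of_re_pos (by simpa using hs₂)
  have hsin : Complex.sin (Real.pi * s) ≠ 0 := by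
    intro h
    rw [h, div_zero] at hrefl
    exact mul_ne_zero hG hG1 hrefl
  have hw0 : (koshWtZero p : ℂ) = 1 / ((1 + 1 / (Real.pi * p) : ℝ) : ℂ) := by
    rw [koshWtZero]; push_cast; rfl
  have hX : (x : ℂ) ^ (2 * s) ≠ 0 := by rw [Ne, Complex.cpow_eq_zero_iff]; tauto
  have hQ : (2 : ℂ) ^ (2 * s) ≠ 0 := by
    rw [Ne, Complex.cpow_eq_zero_iff]; simp
  have hsqrt : (Real.sqrt Real.pi : ℂ) ^ 2 = Real.pi := by
    exact_mod_cast Real.sq_sqrt Real.pi_pos.le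
  have hsq0 : (Real.sqrt Real.pi : ℂ) ≠ 0 := by
    intro h; rw [h] at hsqrt; exact hpic (by rw [← hsqrt]; simp)
  have hC : ((1 + 1 / (Real.pi * p) : ℝ) : ℂ) ≠ 0 := by
    have := Real.pi_pos
    exact_mod_cast (by positivity : (1 + 1 / (Real.pi * p) : ℝ) ≠ 0)
  rw [hw0, h4, hx2] at key
  rw [hx1, h22, Complex.cpow_neg (x : ℂ)]
  rw [show ((1 / (2 * x) : ℝ) : ℂ) = 1 / (2 * x) by push_cast; rfl] at key
  generalize ((1 + 1 / (Real.pi * p) : ℝ) : ℂ) = W at *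
  generalize (x : ℂ) ^ (2 * s) = X at *
  generalize (2 : ℂ) ^ (2 * s) = Q at *
  generalize Complex.sin (Real.pi * s) = S at *
  generalize (Real.sqrt Real.pi : ℂ) = R at *
  rw [← hsqrt] at key hrefl
  have g1 : Complex.Gamma (1 - s) = R ^ 2 / (S * Complex.Gamma s) := by
    field_simp; field_simp at hrefl; linear_combination hrefl
  generalize Complex.Gamma (s - 1 / 2) = A at *
  generalize Complex.Gamma (2 * s - 1) = B at *
  have g2 : B = A * Complex.Gamma s * Q / (4 * R) := by
    field_simp; field_simp at hdup; linear_combination -hdup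
  rw [g1, g2] at key
  have hfac : 1 / (2 * (x : ℂ)) * (Q * X) * (R ^ 2 / S) ≠ 0 := by
    simp [hxc, hQ, hX, hsq0, hsin]
  apply mul_left_cancel₀ hfac
  rw [key]
  field_simp
  ring
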